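/- arXiv:2501.11236 — 2 statements merged into one kernel-verified Lean document; each statement's English description precedes it below -/
import Mathlib

section
/- Let Z and Y be real normed vector spaces, let G_t, G_{t+1} : Z → Y, let y_k, y_m ∈ Y, let z₁, z₂ ∈ Z, and let ε̂ > 0 and α > 0 be reals. Assume: (i) attraction of z₁: ‖y_k - G_{t+1}(z₁)‖ + ε̂ < ‖y_k - G_t(z₁)‖; (ii) the neighborhood bound ‖G_t(z₁) - G_t(z₂)‖ + ‖G_{t+1}(z₁) - G_{t+1}(z₂)‖ ≤ ε̂/2; and (iii) the mode separation ‖y_m - y_k‖ < 2α. Then ‖y_m - G_{t+1}(z₂)‖ + (ε̂/2 - 2α) < ‖y_k - G_t(z₂)‖. -/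
section Step

variable {Z Y : Type*} [PseudoMetricSpace Y]

/-- The latent point `z` is attracted to the image `y` by `ε` in the step from the generator `G` to
`G'` (Definition 3 of the paper). Any real `ε` is allowed. -/
def IsAttracted (G G' : Z → Y) (y : Y) (z : Z) (ε : ℝ) : Prop :=
  dist y (G' z) + ε < dist y (G z)

/-- The latent point `z` is distracted by `ε` in the step from the generator `G` to `G'`
(Definition 4 of the paper): the distance after the step is measured from `y'`, the distance before
it from `y`. Any real `ε` is allowed, and `y` and `y'` need not lie in different modes. -/
def IsDistracted (G G' : Z → Y) (y y' : Y) (z : Z) (ε : ℝ) : Prop :=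
  dist y' (G' z) + ε < dist y (G z)

variable {G G' : Z → Y} {y y' : Y} {z z₁ z₂ : Z} {ε δ β : ℝ}

theorem IsAttracted.of_dist_add_dist_le (h : IsAttracted G G' y z₁ ε)
    (hδ : dist (G z₁) (G z₂) + dist (G' z₁) (G' z₂) ≤ δ) : IsAttracted G G' y z₂ (ε - δ) := by
  unfold IsAttracted at h ⊢
  have after_step : dist y (G' z₂) ≤ dist y (G' z₁) + dist (G' z₁) (G' z₂) := dist_triangle ..
  have before_step : dist y (G z₁) ≤ dist y (G z₂) + dist (G z₁) (G z₂) := dist_triangle_right ..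
  linarith

theorem IsAttracted.isDistracted (h : IsAttracted G G' y z ε) (hβ : dist y' y ≤ β) :
    IsDistracted G G' y y' z (ε - β) :=
  calc
    dist y' (G' z) + (ε - β) ≤ dist y' y + dist y (G' z) + (ε - β) := by
      gcongr
      exact dist_triangle ..
    _ ≤ dist y (G' z) + ε := by linarith
    _ < dist y (G z) := h

theorem attraction_implies_distraction_general (h : IsAttracted G G' y z₁ ε)
    (hδ : dist (G z₁) (G z₂) + dist (G' z₁) (G' z₂) ≤ δ) (hβ : dist y' y ≤ β) :
    IsDistracted G G' y y' z₂ (ε - δ - β) :=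
  (h.of_dist_add_dist_le hδ).isDistracted hβ

end Step

theorem attraction_implies_distraction
    {Z Y : Type*} [NormedAddCommGroup Z] [NormedSpace ℝ Z]
    [NormedAddCommGroup Y] [NormedSpace ℝ Y]
    (Gt Gt1 : Z → Y) (yk ym : Y) (z₁ z₂ : Z) (εhat α : ℝ)
    (hε : 0 < εhat) (hα : 0 < α)
    (hattr : ‖yk - Gt1 z₁‖ + εhat < ‖yk - Gt z₁‖)
    (hnbhd : ‖Gt z₁ - Gt z₂‖ + ‖Gt1 z₁ - Gt1 z₂‖ ≤ εhat / 2)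
    (hmode : ‖ym - yk‖ < 2 * α) :
    ‖ym - Gt1 z₂‖ + (εhat / 2 - 2 * α) < ‖yk - Gt z₂‖ := by
  simp only [← dist_eq_norm] at hattr hnbhd hmode ⊢
  rw [← sub_half εhat]
  exact attraction_implies_distraction_general hattr hnbhd hmode.le
end

section
/- Let Z and Y be real normed vector spaces, let G_t, G_{t+1} : Z → Y, let y_k, y_m ∈ Y, z₁ ∈ Z, and let ε̂ > 0, α > 0, τ > 0 be reals; set r = ε̂ / (2τ). Assume: (i) ‖y_k - G_{t+1}(z₁)‖ + ε̂ < ‖y_k - G_t(z₁)‖; (ii) for every z₂ with ‖z₁ - z₂‖ < r one has ‖G_t(z₁) - G_t(z₂)‖ + ‖G_{t+1}(z₁) - G_{t+1}(z₂)‖ ≤ τ · ‖z₁ - z₂‖; and (iii) ‖y_m - y_k‖ < 2α. Then for every z₂ with ‖z₁ - z₂‖ < r, ‖y_m - G_{t+1}(z₂)‖ + (ε̂/2 - 2α) < ‖y_k - G_t(z₂)‖. -/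
/-!
Moving the latent vector from `z₁` to `z₂` uses up at most `τ * ‖z₁ - z₂‖ < εhat / 2` of the gain
`εhat`, since the two generator displacements enter only through their sum; replacing the target
`yk` by `ym` on one side uses up less than another `2 * α`.
-/

theorem dist_add_sub_lt_dist_of_dist_add_dist_le {Y : Type*} [PseudoMetricSpace Y]
    {y a a' b b' : Y} {ε δ : ℝ} (hgain : dist y b + ε < dist y a)
    (hmove : dist a a' + dist b b' ≤ δ) :
    dist y b' + (ε - δ) < dist y a' := by
  have hb : dist y b' ≤ dist y b + dist b b' := dist_triangle y b b'
  have ha : dist y a ≤ dist y a' + dist a a' := dist_triangle_right y a a'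
  linarith

theorem latent_neighborhood_ball_distraction_general
    {Z Y : Type*} [PseudoMetricSpace Z] [PseudoMetricSpace Y]
    {Gt Gt1 : Z → Y} {yk ym : Y} {z₁ : Z} {εhat α τ : ℝ} (hτ : 0 < τ)
    (hattr : dist yk (Gt1 z₁) + εhat < dist yk (Gt z₁))
    (hlip : ∀ z₂, dist z₁ z₂ < εhat / (2 * τ) →
      dist (Gt z₁) (Gt z₂) + dist (Gt1 z₁) (Gt1 z₂) ≤ τ * dist z₁ z₂)
    (hmode : dist ym yk < 2 * α) (z₂ : Z) (hz₂ : dist z₁ z₂ < εhat / (2 * τ)) :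
    dist ym (Gt1 z₂) + (εhat / 2 - 2 * α) < dist yk (Gt z₂) := by
  have hradius : τ * dist z₁ z₂ < εhat / 2 := by
    rwa [← div_div, lt_div_iff₀' hτ] at hz₂
  have hmove : dist (Gt z₁) (Gt z₂) + dist (Gt1 z₁) (Gt1 z₂) ≤ εhat / 2 :=
    (hlip z₂ hz₂).trans hradius.le
  have hattr₂ : dist yk (Gt1 z₂) + (εhat - εhat / 2) < dist yk (Gt z₂) :=
    dist_add_sub_lt_dist_of_dist_add_dist_le hattr hmove
  have htarget : dist ym (Gt1 z₂) ≤ dist ym yk + dist yk (Gt1 z₂) := dist_triangle _ _ _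
  linarith

theorem latent_neighborhood_ball_distraction
    {Z Y : Type*} [NormedAddCommGroup Z] [NormedSpace ℝ Z]
    [NormedAddCommGroup Y] [NormedSpace ℝ Y]
    (Gt Gt1 : Z → Y) (yk ym : Y) (z₁ : Z) (εhat α τ : ℝ)
    (hε : 0 < εhat) (hα : 0 < α) (hτ : 0 < τ)
    (r : ℝ) (hr : r = εhat / (2 * τ))
    (hattr : ‖yk - Gt1 z₁‖ + εhat < ‖yk - Gt z₁‖)
    (hlip : ∀ z₂ : Z, ‖z₁ - z₂‖ < r →
      ‖Gt z₁ - Gt z₂‖ + ‖Gt1 z₁ - Gt1 z₂‖ ≤ τ * ‖z₁ - z₂‖)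
    (hmode : ‖ym - yk‖ < 2 * α) :
    ∀ z₂ : Z, ‖z₁ - z₂‖ < r →
      ‖ym - Gt1 z₂‖ + (εhat / 2 - 2 * α) < ‖yk - Gt z₂‖ := by
  simp only [← dist_eq_norm, hr] at hattr hlip hmode ⊢
  exact latent_neighborhood_ball_distraction_general hτ hattr hlip hmode
end
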